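/- arXiv:math/0210152 — 11 statements merged into one kernel-verified Lean document; each statement's English description precedes it below -/
import Mathlib

section
/- Let V be a finite-dimensional real vector space, L ⊆ V ⊕ V* a linear Dirac structure, and W ⊆ V a subspace. Then the restriction L_W = {(v, ξ|_W) : (v, ξ) ∈ L, v ∈ W} ⊆ W ⊕ W* is a linear Dirac structure on W. -/
/-!
The dimension of `L_W` is bounded from both sides by rank-nullity.

* Upper bound (`finrank_le_of_isotropic`): `L_W` is isotropic, and an isotropic subspace
  `M ⊆ V ⊕ V*` has dimension at most `dim V`, since its projection to `V` has image `R` and a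
  kernel contained in the annihilator of `R`.
* Lower bound (`finrank_le_finrank_range_restrictMap`): let `K ⊆ L` be the kernel of `f : L → V ⧸ W`,
  so that `dim K = dim V - dim (range f)`. The restriction map `K → W ⊕ W*` has image `L_W`, and
  its kernel consists of pairs `(0, ξ)` in `L` with `ξ` vanishing on `W`. By isotropy `ξ` also
  vanishes on the projection of `L`, so `ξ` descends to an element of the annihilator of `range f`
  in `(V ⧸ W)*`. Hence the kernel has dimension at most `dim V - dim W - dim (range f)`.
-/

open Module

/-- An isotropic subspace of `V ⊕ V*` has dimension at most `dim V`. -/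
theorem finrank_le_of_isotropic
    {V : Type*} [AddCommGroup V] [Module ℝ V] [FiniteDimensional ℝ V]
    (M : Submodule ℝ (V × Dual ℝ V))
    (hiso : ∀ p ∈ M, ∀ q ∈ M, (p.2 q.1 + q.2 p.1) / 2 = 0) :
    finrank ℝ M ≤ finrank ℝ V := by
  let f : M →ₗ[ℝ] V := LinearMap.fst ℝ V (Dual ℝ V) ∘ₗ M.subtype
  let g : LinearMap.ker f →ₗ[ℝ] (LinearMap.range f).dualAnnihilator :=
    LinearMap.codRestrict _
      (LinearMap.snd ℝ V (Dual ℝ V) ∘ₗ M.subtype ∘ₗ (LinearMap.ker f).subtype) (by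
        rintro ⟨⟨p, hp⟩, hk⟩
        rw [Submodule.mem_dualAnnihilator]
        rintro _ ⟨⟨q, hq⟩, rfl⟩
        have h0 : p.1 = 0 := hk
        have h := hiso p hp q hq
        rw [h0, map_zero] at h
        change p.2 q.1 = 0
        linarith)
  have hg : Function.Injective g := by
    rintro ⟨⟨p, hp⟩, hpk⟩ ⟨⟨q, hq⟩, hqk⟩ h
    have h1 : p.1 = q.1 := Eq.trans hpk (Eq.symm hqk)
    have h2 : p.2 = q.2 := congrArg Subtype.val h
    exact Subtype.ext (Subtype.ext (Prod.ext h1 h2))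
  have h1 := LinearMap.finrank_le_finrank_of_injective hg
  have h2 := LinearMap.finrank_range_add_finrank_ker (K := ℝ) (V := M) f
  have h3 := Subspace.finrank_add_finrank_dualAnnihilator_eq (LinearMap.range f)
  omega

/-- The map `(v, ξ) ↦ v + W` from `L` to `V ⧸ W` whose kernel is the set of pairs `(v, ξ)` with
`v ∈ W`. -/
def toQuotient {V : Type*} [AddCommGroup V] [Module ℝ V]
    (L : Submodule ℝ (V × Dual ℝ V)) (W : Submodule ℝ V) : L →ₗ[ℝ] V ⧸ W :=
  W.mkQ ∘ₗ LinearMap.fst ℝ V (Dual ℝ V) ∘ₗ L.subtype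

theorem mem_ker_toQuotient {V : Type*} [AddCommGroup V] [Module ℝ V]
    (L : Submodule ℝ (V × Dual ℝ V)) (W : Submodule ℝ V) (p : L) :
    p ∈ LinearMap.ker (toQuotient L W) ↔ p.1.1 ∈ W := by
  simp [toQuotient]

/-- The restriction map `(v, ξ) ↦ (v, ξ|_W)`, defined on the pairs in `L` with `v ∈ W`. -/
def restrictMap {V : Type*} [AddCommGroup V] [Module ℝ V]
    (L : Submodule ℝ (V × Dual ℝ V)) (W : Submodule ℝ V) :
    LinearMap.ker (toQuotient L W) →ₗ[ℝ] W × Dual ℝ W :=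
  LinearMap.prod
    (LinearMap.codRestrict W
      (LinearMap.fst ℝ V (Dual ℝ V) ∘ₗ L.subtype ∘ₗ (LinearMap.ker (toQuotient L W)).subtype)
      (fun p => (mem_ker_toQuotient L W p.1).1 p.2))
    (W.subtype.dualMap ∘ₗ LinearMap.snd ℝ V (Dual ℝ V) ∘ₗ L.subtype ∘ₗ
      (LinearMap.ker (toQuotient L W)).subtype)

/-- The lower bound `dim W ≤ dim L_W`, with `L_W` presented as the range of `restrictMap`. -/
theorem finrank_le_finrank_range_restrictMap
    {V : Type*} [AddCommGroup V] [Module ℝ V] [FiniteDimensional ℝ V]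
    (L : Submodule ℝ (V × Dual ℝ V))
    (hiso : ∀ p ∈ L, ∀ q ∈ L, (p.2 q.1 + q.2 p.1) / 2 = 0)
    (hdim : finrank ℝ L = finrank ℝ V)
    (W : Submodule ℝ V) :
    finrank ℝ W ≤ finrank ℝ (LinearMap.range (restrictMap L W)) := by
  -- The second component of a kernel element, as a functional vanishing on `W`.
  let s : LinearMap.ker (restrictMap L W) →ₗ[ℝ] W.dualAnnihilator :=
    LinearMap.codRestrict _
      (LinearMap.snd ℝ V (Dual ℝ V) ∘ₗ L.subtype ∘ₗ (LinearMap.ker (toQuotient L W)).subtype ∘ₗ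
        (LinearMap.ker (restrictMap L W)).subtype) (by
        rintro ⟨p, hp⟩
        rw [Submodule.mem_dualAnnihilator]
        intro w hw
        have h2 : W.subtype.dualMap p.1.1.2 = 0 := congrArg Prod.snd hp
        exact LinearMap.congr_fun h2 ⟨w, hw⟩)
  have hfst : ∀ p : LinearMap.ker (restrictMap L W), p.1.1.1.1 = 0 := fun p =>
    congrArg (fun q : W × Dual ℝ W => (q.1 : V)) p.2
  let g : LinearMap.ker (restrictMap L W) →ₗ[ℝ]
      (LinearMap.range (toQuotient L W)).dualAnnihilator :=
    LinearMap.codRestrict _ (W.dualQuotEquivDualAnnihilator.symm.toLinearMap ∘ₗ s) (by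
      intro p
      rw [Submodule.mem_dualAnnihilator]
      rintro _ ⟨q, rfl⟩
      have h := hiso p.1.1.1 p.1.1.2 q.1 q.2
      rw [hfst p, map_zero] at h
      change p.1.1.1.2 q.1.1 = 0
      linarith)
  have hg : Function.Injective g := by
    intro p q h
    have h1 : W.dualQuotEquivDualAnnihilator.symm (s p) =
        W.dualQuotEquivDualAnnihilator.symm (s q) := congrArg Subtype.val h
    have h2 : s p = s q := W.dualQuotEquivDualAnnihilator.symm.injective h1
    have h3 : p.1.1.1.2 = q.1.1.1.2 := congrArg Subtype.val h2
    exact Subtype.ext (Subtype.ext (Subtype.ext (Prod.ext ((hfst p).trans (hfst q).symm) h3)))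
  have h1 := LinearMap.finrank_le_finrank_of_injective hg
  -- Instance search does not find this group structure on a subspace of the subspace `L`.
  let : AddCommGroup (LinearMap.ker (toQuotient L W)) :=
    Submodule.addCommGroup (R := ℝ) (M := L) (LinearMap.ker (toQuotient L W))
  have h2 := LinearMap.finrank_range_add_finrank_ker (K := ℝ)
    (V := LinearMap.ker (toQuotient L W)) (restrictMap L W)
  have h3 := LinearMap.finrank_range_add_finrank_ker (K := ℝ) (V := L) (toQuotient L W)
  have h4 := Subspace.finrank_add_finrank_dualAnnihilator_eq (LinearMap.range (toQuotient L W))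
  have h5 := W.finrank_quotient_add_finrank
  omega

/-- Let `V` be a finite-dimensional real vector space, `L ⊆ V ⊕ V*` a linear
Dirac structure, and `W ⊆ V` a subspace.  Then the restriction
`L_W = {(v, ξ|_W) : (v, ξ) ∈ L, v ∈ W} ⊆ W ⊕ W*` is a linear Dirac structure on `W`:
it is a linear subspace of `W ⊕ W*` which is isotropic for the canonical symmetric pairing
and has dimension `dim W`. -/
theorem restriction_of_linear_dirac_structure_is_linear_dirac_structure
    {V : Type*} [AddCommGroup V] [Module ℝ V] [FiniteDimensional ℝ V]
    (L : Submodule ℝ (V × Dual ℝ V))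
    (hiso : ∀ p ∈ L, ∀ q ∈ L, (p.2 q.1 + q.2 p.1) / 2 = 0)
    (hdim : finrank ℝ L = finrank ℝ V)
    (W : Submodule ℝ V) :
    ∃ LW : Submodule ℝ (W × Dual ℝ W),
      (LW : Set (W × Dual ℝ W)) =
        {q | ∃ p ∈ L, ∃ h : p.1 ∈ W, q = (⟨p.1, h⟩, W.subtype.dualMap p.2)} ∧
      (∀ p ∈ LW, ∀ q ∈ LW, (p.2 q.1 + q.2 p.1) / 2 = 0) ∧
      finrank ℝ LW = finrank ℝ W := by
  have hLW : ∀ p ∈ LinearMap.range (restrictMap L W), ∀ q ∈ LinearMap.range (restrictMap L W),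
      (p.2 q.1 + q.2 p.1) / 2 = 0 := by
    rintro _ ⟨p, rfl⟩ _ ⟨q, rfl⟩
    exact hiso p.1.1 p.1.2 q.1.1 q.1.2
  refine ⟨LinearMap.range (restrictMap L W), ?_, hLW, le_antisymm
    (finrank_le_of_isotropic _ hLW) (finrank_le_finrank_range_restrictMap L hiso hdim W)⟩
  ext q
  constructor
  · rintro ⟨p, rfl⟩
    exact ⟨p.1.1, p.1.2, (mem_ker_toQuotient L W p.1).1 p.2, rfl⟩
  · rintro ⟨p, hp, h, rfl⟩
    exact ⟨⟨⟨p, hp⟩, (mem_ker_toQuotient L W ⟨p, hp⟩).2 h⟩, rfl⟩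
end

section
/- Let V be a finite-dimensional real vector space, Π a bivector on V, and W ⊆ V a Poisson-Dirac subspace. Then the restriction map A_W → W*, ξ ↦ ξ|_W, is surjective and its kernel equals W⁰ ∩ ker ♯; in particular W⁰ ∩ A_W = W⁰ ∩ ker ♯, so there is a short exact sequence 0 → W⁰ ∩ ker ♯ → A_W → W* → 0. -/
/-!
If `ξ ∈ W⁰` and `♯ξ ∈ W`, then `♯ξ ∈ W ∩ ♯(W⁰) = 0`; this gives `W⁰ ∩ A_W = W⁰ ∩ ker ♯`, and the
left-hand side is the kernel of the restriction map `A_W → W*`.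

For surjectivity, dualizing `W ∩ ♯(W⁰) = 0` gives `W⁰ + (♯(W⁰))⁰ = V*`, and skew-symmetry of the
bivector together with `W⁰⁰ = W` gives `(♯(W⁰))⁰ ⊆ A_W`. Hence any extension to `V` of a functional
on `W` can be corrected by an element of `W⁰` so as to lie in `A_W`.
-/

open Module

/-- Let `V` be a finite-dimensional real vector space, `Π` a bivector on `V`
(with induced `♯ : V* → V`), and `W ⊆ V` a Poisson-Dirac subspace (`W ∩ ♯(W⁰) = {0}`).
Then the restriction map `A_W → W*`, `ξ ↦ ξ|_W`, is surjective and its kernel is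
`W⁰ ∩ ker ♯`; in particular `W⁰ ∩ A_W = W⁰ ∩ ker ♯`, so there is a short exact sequence
`0 → W⁰ ∩ ker ♯ → A_W → W* → 0`. -/
theorem poisson_dirac_restriction_map_surjective_with_kernel
    {V : Type*} [AddCommGroup V] [Module ℝ V] [FiniteDimensional ℝ V]
    (Pi : Dual ℝ V →ₗ[ℝ] Dual ℝ V →ₗ[ℝ] ℝ) (hPi : ∀ ξ, Pi ξ ξ = 0)
    (sharp : Dual ℝ V →ₗ[ℝ] V) (hsharp : ∀ ξ η, η (sharp ξ) = Pi ξ η)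
    (W : Submodule ℝ V)
    (hPD : W ⊓ Submodule.map sharp W.dualAnnihilator = ⊥) :
    Function.Surjective (W.subtype.dualMap.domRestrict (Submodule.comap sharp W)) ∧
    (∀ ξ : Submodule.comap sharp W,
      W.subtype.dualMap.domRestrict (Submodule.comap sharp W) ξ = 0 ↔
        (ξ : Dual ℝ V) ∈ W.dualAnnihilator ⊓ LinearMap.ker sharp) ∧
    W.dualAnnihilator ⊓ Submodule.comap sharp W =
      W.dualAnnihilator ⊓ LinearMap.ker sharp := by
  have hinf : W.dualAnnihilator ⊓ Submodule.comap sharp W =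
      W.dualAnnihilator ⊓ LinearMap.ker sharp := by
    ext ξ
    simp only [Submodule.mem_inf, Submodule.mem_comap, LinearMap.mem_ker]
    refine and_congr_right fun hξ => ⟨fun h => ?_, fun h => h ▸ W.zero_mem⟩
    have hmem : sharp ξ ∈ W ⊓ Submodule.map sharp W.dualAnnihilator :=
      ⟨h, Submodule.mem_map_of_mem hξ⟩
    simpa [hPD] using hmem
  refine ⟨fun φ => ?_, fun ξ => ?_, hinf⟩
  · obtain ⟨ξ, hξ⟩ := LinearMap.dualMap_surjective_of_injective W.injective_subtype φ
    have htop : W.dualAnnihilator ⊔ (Submodule.map sharp W.dualAnnihilator).dualAnnihilator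
        = ⊤ := by
      rw [← Subspace.dualAnnihilator_inf_eq, hPD, Submodule.dualAnnihilator_bot]
    obtain ⟨α, hα, β, hβ, rfl⟩ := Submodule.mem_sup.1 (htop ▸ Submodule.mem_top : ξ ∈ _)
    rw [Submodule.mem_dualAnnihilator] at hα hβ
    refine ⟨⟨β, ?_⟩, ?_⟩
    · rw [Submodule.mem_comap, ← Subspace.forall_mem_dualAnnihilator_apply_eq_zero_iff]
      intro γ hγ
      have hskew : Pi β γ = -Pi γ β := (LinearMap.IsAlt.neg hPi γ β).symm
      rw [hsharp, hskew, ← hsharp, hβ _ (Submodule.mem_map_of_mem hγ), neg_zero]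
    · rw [← hξ]
      ext w
      simp [hα w w.2]
  · -- The kernel of restriction is `W⁰ ∩ A_W`, and `hinf` identifies it.
    rw [← hinf, Submodule.mem_inf, and_iff_left ξ.2, Submodule.mem_dualAnnihilator,
      LinearMap.ext_iff]
    simp
end

section
/- Let V be a finite-dimensional real vector space, Π a bivector on V, and W ⊆ V a Poisson-Dirac subspace. Then there exists a unique alternating bilinear form Π_W on W* such that Π_W(ξ|_W, η|_W) = Π(ξ, η) for all ξ, η ∈ A_W. (In particular, for ξ, η ∈ A_W the value Π(ξ, η) depends only on the restrictions ξ|_W and η|_W.) -/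
open Module

/-!
By skew-symmetry `A_W` is the annihilator of `♯(W⁰)`, so the Poisson-Dirac condition
`W ∩ ♯(W⁰) = 0` dualizes to `W⁰ + A_W = V*`: every functional on `W` is the restriction of an
element of `A_W`. This gives uniqueness. For existence, choose a linear section `s` of the
restriction `A_W → W*` and put `Π_W(ζ, θ) = Π(s ζ, s θ)`; this does not depend on the extensions
because `Π` vanishes on `A_W × W⁰`.
-/

/-- Under the Poisson-Dirac condition every functional on `W` extends to an element of `A_W`. -/
theorem restrict_comap_sharp_surjective
    {V : Type*} [AddCommGroup V] [Module ℝ V]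
    (Pi : Dual ℝ V →ₗ[ℝ] Dual ℝ V →ₗ[ℝ] ℝ) (hskew : ∀ ξ η, Pi ξ η = -Pi η ξ)
    (sharp : Dual ℝ V →ₗ[ℝ] V) (hsharp : ∀ ξ η, η (sharp ξ) = Pi ξ η)
    (W : Submodule ℝ V)
    (hPD : W ⊓ Submodule.map sharp W.dualAnnihilator = ⊥) :
    Function.Surjective (W.subtype.dualMap ∘ₗ (Submodule.comap sharp W).subtype) := by
  have hA : (Submodule.map sharp W.dualAnnihilator).dualAnnihilator
      ≤ Submodule.comap sharp W := by
    intro ξ hξ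
    rw [Submodule.mem_dualAnnihilator] at hξ
    -- over a field, `W` is recovered as the set where all of `W⁰` vanishes
    rw [Submodule.mem_comap, ← Subspace.forall_mem_dualAnnihilator_apply_eq_zero_iff]
    intro η hη
    rw [hsharp, hskew, ← hsharp, hξ _ (Submodule.mem_map_of_mem hη), neg_zero]
  have htop : W.dualAnnihilator ⊔ (Submodule.map sharp W.dualAnnihilator).dualAnnihilator = ⊤ := by
    rw [← Subspace.dualAnnihilator_inf_eq, hPD, Submodule.dualAnnihilator_bot]
  intro ζ
  obtain ⟨ξ, rfl⟩ := LinearMap.dualMap_surjective_of_injective W.injective_subtype ζ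
  obtain ⟨α, hα, β, hβ, rfl⟩ := Submodule.mem_sup.mp (htop ▸ Submodule.mem_top : ξ ∈ _)
  refine ⟨⟨β, hA hβ⟩, ?_⟩
  ext w
  simp [(Submodule.mem_dualAnnihilator α).mp hα w w.2]

/-- Let `V` be a finite-dimensional real vector space, `Π` a bivector on `V`
(with induced `♯ : V* → V`), and `W ⊆ V` a Poisson-Dirac subspace (`W ∩ ♯(W⁰) = {0}`).
Then there is a unique alternating bilinear form `Π_W` on `W*` such that
`Π_W (ξ|_W) (η|_W) = Π ξ η` for all `ξ, η ∈ A_W = {ξ : ♯ξ ∈ W}`.  (In particular, for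
`ξ, η ∈ A_W` the value `Π ξ η` depends only on the restrictions `ξ|_W` and `η|_W`.) -/
theorem poisson_dirac_subspace_has_unique_induced_bivector
    {V : Type*} [AddCommGroup V] [Module ℝ V] [FiniteDimensional ℝ V]
    (Pi : Dual ℝ V →ₗ[ℝ] Dual ℝ V →ₗ[ℝ] ℝ) (hPi : ∀ ξ, Pi ξ ξ = 0)
    (sharp : Dual ℝ V →ₗ[ℝ] V) (hsharp : ∀ ξ η, η (sharp ξ) = Pi ξ η)
    (W : Submodule ℝ V)
    (hPD : W ⊓ Submodule.map sharp W.dualAnnihilator = ⊥) :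
    ∃! PiW : Dual ℝ W →ₗ[ℝ] Dual ℝ W →ₗ[ℝ] ℝ,
      (∀ ζ, PiW ζ ζ = 0) ∧
      ∀ ξ ∈ Submodule.comap sharp W, ∀ η ∈ Submodule.comap sharp W,
        PiW (W.subtype.dualMap ξ) (W.subtype.dualMap η) = Pi ξ η := by
  have hskew : ∀ ξ η, Pi ξ η = -Pi η ξ := fun ξ η =>
    (LinearMap.IsAlt.neg (B := Pi) hPi η ξ).symm
  have hsurj := restrict_comap_sharp_surjective Pi hskew sharp hsharp W hPD
  -- for `ξ ∈ A_W`, the value `Π(ξ, η) = η(♯ξ)` only sees `η` on `W`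
  have hright : ∀ ξ ∈ Submodule.comap sharp W, ∀ η η' : Dual ℝ V,
      W.subtype.dualMap η = W.subtype.dualMap η' → Pi ξ η = Pi ξ η' := by
    intro ξ hξ η η' h
    rw [← hsharp, ← hsharp]
    exact LinearMap.congr_fun h ⟨sharp ξ, hξ⟩
  obtain ⟨s, hs⟩ := LinearMap.exists_rightInverse_of_surjective _ (LinearMap.range_eq_top.mpr hsurj)
  have hs' : ∀ ζ, W.subtype.dualMap (s ζ : Dual ℝ V) = ζ := fun ζ => LinearMap.congr_fun hs ζ
  let t := (Submodule.comap sharp W).subtype ∘ₗ s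
  refine ⟨Pi.compl₁₂ t t, ⟨fun ζ => hPi _, ?_⟩, ?_⟩
  · intro ξ hξ η hη
    change Pi (s _ : Dual ℝ V) (s _ : Dual ℝ V) = _
    rw [hright _ (s _).2 _ η (hs' _), hskew, hright η hη _ ξ (hs' _), ← hskew]
  · rintro P ⟨-, hP⟩
    refine LinearMap.ext₂ fun ζ θ => ?_
    have h := hP _ (s ζ).2 _ (s θ).2
    rwa [hs', hs'] at h
end

section
/- Let V be a finite-dimensional real vector space, Π a bivector on V, W ⊆ V a subspace, and p : V → V a linear projection with range W (p∘p = p, p(V) = W), with kernel E = ker p. Then the following are equivalent: (i) p vanishes on ♯(W⁰), i.e. p(♯ξ) = 0 for all ξ ∈ W⁰ (p is a Dirac projection); (ii) ♯(ξ ∘ p) ∈ W for every ξ ∈ V* (i.e. the image of the transpose p* : V* → V* lies in A_W, so p* gives a splitting of the restriction map A_W → W*); (iii) Π(ξ, η) = 0 for all ξ ∈ W⁰ and all η ∈ E⁰ (W⁰ and E⁰ are Π-orthogonal). -/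
/-!
All three conditions say that `Π(ξ, ζ ∘ p) = 0` for all `ξ ∈ W⁰` and `ζ ∈ V*`. For (i), a vector
is zero iff every functional kills it, and `ζ (p (♯ξ)) = Π(ξ, ζ ∘ p)`. For (ii), a vector lies
in `W` iff `W⁰` kills it, and `ξ (♯(ζ ∘ p)) = Π(ζ ∘ p, ξ) = -Π(ξ, ζ ∘ p)`. For (iii), `E⁰` is the
range of the transpose of `p`.
-/

open Module

/-- Let `V` be a finite-dimensional real vector space, `Π` a bivector
(with induced `♯ : V* → V`), `W ⊆ V` a subspace, and `p : V → V` a linear projection with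
range `W` (`p ∘ p = p`, `p(V) = W`), with kernel `E = ker p`.  Then the following are
equivalent:
(i) `p` vanishes on `♯(W⁰)` (`p` is a Dirac projection);
(ii) `♯(ξ ∘ p) ∈ W` for every `ξ ∈ V*`, i.e. the image of the transpose `p* : V* → V*`
lies in `A_W` (so `p*` gives a splitting of the restriction map `A_W → W*`);
(iii) `Π ξ η = 0` for all `ξ ∈ W⁰` and all `η ∈ E⁰` (`W⁰` and `E⁰` are `Π`-orthogonal). -/
theorem dirac_projection_tfae
    {V : Type*} [AddCommGroup V] [Module ℝ V] [FiniteDimensional ℝ V]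
    (Pi : Dual ℝ V →ₗ[ℝ] Dual ℝ V →ₗ[ℝ] ℝ) (hPi : ∀ ξ, Pi ξ ξ = 0)
    (sharp : Dual ℝ V →ₗ[ℝ] V) (hsharp : ∀ ξ η, η (sharp ξ) = Pi ξ η)
    (W : Submodule ℝ V) (p : V →ₗ[ℝ] V)
    (hproj : p ∘ₗ p = p) (hrange : LinearMap.range p = W) :
    ((∀ ξ ∈ W.dualAnnihilator, p (sharp ξ) = 0) ↔
      (∀ ξ : Dual ℝ V, sharp (p.dualMap ξ) ∈ W)) ∧
    ((∀ ξ ∈ W.dualAnnihilator, p (sharp ξ) = 0) ↔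
      (∀ ξ ∈ W.dualAnnihilator, ∀ η ∈ (LinearMap.ker p).dualAnnihilator, Pi ξ η = 0)) := by
  have skew : ∀ ξ η, Pi ξ η = -Pi η ξ := fun ξ η => by
    have h := hPi (ξ + η)
    simp only [map_add, LinearMap.add_apply, hPi] at h
    linarith
  have hi : (∀ ξ ∈ W.dualAnnihilator, p (sharp ξ) = 0) ↔
      ∀ ξ ∈ W.dualAnnihilator, ∀ ζ : Dual ℝ V, Pi ξ (p.dualMap ζ) = 0 := by
    refine forall₂_congr fun ξ _ => ?_
    rw [← Module.forall_dual_apply_eq_zero_iff ℝ (p (sharp ξ))]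
    exact forall_congr' fun ζ => by rw [← hsharp, LinearMap.dualMap_apply]
  have hii : (∀ ζ : Dual ℝ V, sharp (p.dualMap ζ) ∈ W) ↔
      ∀ ξ ∈ W.dualAnnihilator, ∀ ζ : Dual ℝ V, Pi ξ (p.dualMap ζ) = 0 := by
    have key : ∀ ζ : Dual ℝ V, sharp (p.dualMap ζ) ∈ W ↔
        ∀ ξ ∈ W.dualAnnihilator, Pi ξ (p.dualMap ζ) = 0 := fun ζ => by
      rw [← Subspace.forall_mem_dualAnnihilator_apply_eq_zero_iff W]
      refine forall₂_congr fun ξ _ => ?_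
      rw [hsharp, skew, neg_eq_zero]
    simp only [key]
    exact ⟨fun h ξ hξ ζ => h ζ ξ hξ, fun h ζ ξ hξ => h ξ hξ ζ⟩
  refine ⟨hi.trans hii.symm, hi.trans ?_⟩
  rw [← LinearMap.range_dualMap_eq_dualAnnihilator_ker]
  simp only [LinearMap.mem_range, forall_exists_index, forall_apply_eq_imp_iff]
end

section
/- Let V be a finite-dimensional real vector space, Π a bivector on V, and W ⊆ V a Poisson-Dirac subspace. Set r = dim(W⁰ ∩ ker ♯) (the rank of W), rank Π = dim(Im ♯), and rank Π_W = dim(Im ♯_W), where Π_W is the induced bivector on W. Then: dim A_W = dim W + r; dim V = dim(W + ♯(W⁰)) + r; (dim V − dim W) − r = rank Π − rank Π_W; and consequently 0 ≤ r ≤ dim V − dim W. -/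
/-!
Since `♯` is skew, `A_W` is the annihilator of `♯(W⁰)`.  Rank-nullity for `♯` restricted to `W⁰`
gives `dim ♯(W⁰) = dim V - dim W - r`, so `dim A_W = dim W + r`; as `W` and `♯(W⁰)` are
independent, the formula for `dim V` follows as well.

For the rank of the induced bivector, the Poisson-Dirac condition gives `A_W ∩ W⁰ = W⁰ ∩ ker ♯`,
so by the dimension of `A_W` restriction to `W` maps `A_W` onto `W*`.  Then `♯_W (ξ|_W) = ♯ξ` for
`ξ ∈ A_W`, whence `Im ♯_W = ♯(A_W)`, and rank-nullity for `♯` on `A_W ⊇ ker ♯` concludes.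
-/

open Module

/-- Rank-nullity for the restriction of a linear map to a subspace. -/
lemma finrank_map_add_finrank_inf_ker {E F : Type*} [AddCommGroup E] [Module ℝ E]
    [FiniteDimensional ℝ E] [AddCommGroup F] [Module ℝ F] (f : E →ₗ[ℝ] F) (S : Submodule ℝ E) :
    finrank ℝ (S.map f) + finrank ℝ (S ⊓ LinearMap.ker f : Submodule ℝ E) = finrank ℝ S := by
  have h := (f.domRestrict S).finrank_range_add_finrank_ker
  rw [LinearMap.range_domRestrict, LinearMap.ker_domRestrict] at h
  rw [← h, ← Submodule.map_comap_subtype,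
    LinearEquiv.finrank_eq (Submodule.equivSubtypeMap S ((LinearMap.ker f).comap S.subtype))]

/-- Let `V` be a finite-dimensional real vector space, `Π` a bivector on
`V` (with induced `♯ : V* → V`), and `W ⊆ V` a Poisson-Dirac subspace, with induced
bivector `Π_W` on `W` and induced map `♯_W : W* → W`.  Set `r = dim (W⁰ ∩ ker ♯)` (the
rank of `W`), `rank Π = dim (Im ♯)` and `rank Π_W = dim (Im ♯_W)`.  Then:
`dim A_W = dim W + r`; `dim V = dim (W + ♯(W⁰)) + r`;
`codim W − r = rank Π − rank Π_W` (stated additively as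
`dim V + rank Π_W = dim W + r + rank Π`); and consequently `0 ≤ r ≤ codim W`
(stated as `r + dim W ≤ dim V`). -/
theorem poisson_dirac_rank_identities
    {V : Type*} [AddCommGroup V] [Module ℝ V] [FiniteDimensional ℝ V]
    (Pi : Dual ℝ V →ₗ[ℝ] Dual ℝ V →ₗ[ℝ] ℝ) (hPi : ∀ ξ, Pi ξ ξ = 0)
    (sharp : Dual ℝ V →ₗ[ℝ] V) (hsharp : ∀ ξ η, η (sharp ξ) = Pi ξ η)
    (W : Submodule ℝ V)
    (hPD : W ⊓ Submodule.map sharp W.dualAnnihilator = ⊥)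
    (PiW : Dual ℝ W →ₗ[ℝ] Dual ℝ W →ₗ[ℝ] ℝ)
    (hPiW : ∀ ξ ∈ Submodule.comap sharp W, ∀ η ∈ Submodule.comap sharp W,
      PiW (W.subtype.dualMap ξ) (W.subtype.dualMap η) = Pi ξ η)
    (sharpW : Dual ℝ W →ₗ[ℝ] W) (hsharpW : ∀ ζ ζ', ζ' (sharpW ζ) = PiW ζ ζ')
    (r : ℕ)
    (hr : r = finrank ℝ (W.dualAnnihilator ⊓ LinearMap.ker sharp : Submodule ℝ (Dual ℝ V))) :
    finrank ℝ (Submodule.comap sharp W : Submodule ℝ (Dual ℝ V)) = finrank ℝ W + r ∧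
    finrank ℝ V
      = finrank ℝ (W ⊔ Submodule.map sharp W.dualAnnihilator : Submodule ℝ V) + r ∧
    finrank ℝ V + finrank ℝ (LinearMap.range sharpW)
      = finrank ℝ W + r + finrank ℝ (LinearMap.range sharp) ∧
    r + finrank ℝ W ≤ finrank ℝ V := by
  have hskew : ∀ ξ η : Dual ℝ V, η (sharp ξ) = - ξ (sharp η) := by
    intro ξ η
    have h := hPi (ξ + η)
    simp only [map_add, LinearMap.add_apply, hPi] at h
    rw [hsharp, hsharp]
    linarith
  have hA : Submodule.comap sharp W
      = (Submodule.map sharp W.dualAnnihilator).dualAnnihilator := by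
    ext ξ
    rw [Submodule.mem_comap, Submodule.mem_dualAnnihilator,
      ← Subspace.forall_mem_dualAnnihilator_apply_eq_zero_iff]
    constructor
    · rintro h _ ⟨η, hη, rfl⟩
      rw [hskew, h η hη, neg_zero]
    · intro h η hη
      rw [hskew, h _ (Submodule.mem_map_of_mem hη), neg_zero]
  have hrn := finrank_map_add_finrank_inf_ker sharp W.dualAnnihilator
  rw [← hr] at hrn
  have hW := Subspace.finrank_add_finrank_dualAnnihilator_eq W
  have hW2 := Subspace.finrank_add_finrank_dualAnnihilator_eq
    (Submodule.map sharp W.dualAnnihilator)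
  rw [← hA] at hW2
  have hsum := Submodule.finrank_sup_add_finrank_inf_eq W
    (Submodule.map sharp W.dualAnnihilator)
  rw [hPD, finrank_bot] at hsum
  have hdimA : finrank ℝ (Submodule.comap sharp W : Submodule ℝ (Dual ℝ V))
      = finrank ℝ W + r := by lia
  have hinf : Submodule.comap sharp W ⊓ LinearMap.ker W.subtype.dualMap
      = W.dualAnnihilator ⊓ LinearMap.ker sharp := by
    rw [LinearMap.ker_dualMap_eq_dualAnnihilator_range, Submodule.range_subtype]
    ext ξ
    constructor
    · rintro ⟨h1, h2⟩
      have h3 : sharp ξ ∈ W ⊓ Submodule.map sharp W.dualAnnihilator :=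
        ⟨h1, Submodule.mem_map_of_mem h2⟩
      rw [hPD] at h3
      exact ⟨h2, h3⟩
    · rintro ⟨h1, h2⟩
      refine ⟨?_, h1⟩
      rw [SetLike.mem_coe, Submodule.mem_comap, LinearMap.mem_ker.mp h2]
      exact W.zero_mem
  have hsurj : (Submodule.comap sharp W).map W.subtype.dualMap = ⊤ := by
    apply Submodule.eq_top_of_finrank_eq
    have h := finrank_map_add_finrank_inf_ker W.subtype.dualMap (Submodule.comap sharp W)
    rw [hinf, ← hr] at h
    rw [Subspace.dual_finrank_eq]
    lia
  have hlift : ∀ ζ : Dual ℝ W, ∃ ξ ∈ Submodule.comap sharp W, W.subtype.dualMap ξ = ζ :=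
    fun ζ => Submodule.mem_map.mp (hsurj ▸ Submodule.mem_top)
  have hval : ∀ ξ ∈ Submodule.comap sharp W,
      W.subtype (sharpW (W.subtype.dualMap ξ)) = sharp ξ := by
    intro ξ hξ
    have key : sharpW (W.subtype.dualMap ξ) = ⟨sharp ξ, hξ⟩ := by
      rw [← sub_eq_zero, ← Module.forall_dual_apply_eq_zero_iff ℝ]
      intro ζ
      obtain ⟨η, hη, rfl⟩ := hlift ζ
      rw [map_sub, hsharpW, hPiW ξ hξ η hη, ← hsharp]
      exact sub_self _
    rw [key]
    rfl
  have hrange : (LinearMap.range sharpW).map W.subtype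
      = (Submodule.comap sharp W).map sharp := by
    ext v
    constructor
    · rintro ⟨_, ⟨ζ, rfl⟩, rfl⟩
      obtain ⟨ξ, hξ, rfl⟩ := hlift ζ
      rw [hval ξ hξ]
      exact Submodule.mem_map_of_mem hξ
    · rintro ⟨ξ, hξ, rfl⟩
      exact ⟨_, ⟨W.subtype.dualMap ξ, rfl⟩, hval ξ hξ⟩
  have hrk : finrank ℝ (LinearMap.range sharpW)
      = finrank ℝ ((Submodule.comap sharp W).map sharp) := by
    rw [← hrange]
    exact LinearEquiv.finrank_eq (Submodule.equivSubtypeMap W (LinearMap.range sharpW))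
  have hrnA := finrank_map_add_finrank_inf_ker sharp (Submodule.comap sharp W)
  rw [inf_eq_right.mpr (LinearMap.ker_le_comap sharp)] at hrnA
  have hrnV := sharp.finrank_range_add_finrank_ker
  rw [Subspace.dual_finrank_eq] at hrnV
  refine ⟨hdimA, ?_, ?_, ?_⟩ <;> lia
end

section
/- Let V be a finite-dimensional real vector space, Π a bivector on V, and W ⊆ V a subspace. Then the following are equivalent: (i) V = W + ♯(W⁰) (W is cosymplectic); (ii) V = W ⊕ ♯(W⁰); (iii) W ∩ ♯(W⁰) = {0} and W⁰ ∩ ker ♯ = {0} (W is a Poisson-Dirac subspace of rank zero); (iv) W ∩ ♯(W⁰) = {0} and W + Im ♯ = V. -/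
/-!
Skew-symmetry, `η (♯ξ) = -ξ (♯η)`, shows that the annihilator of `W + ♯(W⁰)` is
`{ξ ∈ W⁰ : ♯ξ ∈ W}` and that `W⁰ ∩ ker ♯` is the annihilator of `W + Im ♯`. Hence (i) says that
`ξ ∈ W⁰` and `♯ξ ∈ W` force `ξ = 0`, which splits into the two conditions of (iii): first
`♯ξ = 0`, by `W ∩ ♯(W⁰) = 0`, and then `ξ = 0`, by `W⁰ ∩ ker ♯ = 0`. The latter condition is
equivalent to `W + Im ♯ = V`, which gives (iv), and (ii) follows from (i) and (iii).
-/

open Module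

/-- Condition (i) in dual form: the annihilator of `W + ♯(W⁰)` is `{ξ ∈ W⁰ : ♯ξ ∈ W}`, so the
sum is all of `V` exactly when this set is trivial. -/
lemma sup_map_sharp_eq_top_iff {V : Type*} [AddCommGroup V] [Module ℝ V]
    (sharp : Dual ℝ V →ₗ[ℝ] V) (hskew : ∀ ξ η : Dual ℝ V, η (sharp ξ) = -ξ (sharp η))
    (W : Submodule ℝ V) :
    W ⊔ Submodule.map sharp W.dualAnnihilator = ⊤ ↔
      ∀ ξ ∈ W.dualAnnihilator, sharp ξ ∈ W → ξ = 0 := by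
  constructor
  · intro h ξ hξ hW
    have hle : W ⊔ Submodule.map sharp W.dualAnnihilator ≤ LinearMap.ker ξ := by
      refine sup_le (fun w hw => (Submodule.mem_dualAnnihilator ξ).1 hξ w hw) ?_
      rintro _ ⟨η, hη, rfl⟩
      rw [LinearMap.mem_ker, hskew, (Submodule.mem_dualAnnihilator η).1 hη _ hW, neg_zero]
    rw [h, top_le_iff] at hle
    exact LinearMap.ker_eq_top.1 hle
  · intro h
    by_contra hne
    obtain ⟨ξ, hξ0, hξ⟩ := Submodule.exists_le_ker_of_lt_top _ (lt_top_iff_ne_top.2 hne)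
    have hξW : ξ ∈ W.dualAnnihilator :=
      (Submodule.mem_dualAnnihilator ξ).2 fun w hw => hξ (Submodule.mem_sup_left hw)
    refine hξ0 (h ξ hξW ?_)
    -- `♯ξ ∈ W` because every functional vanishing on `W` vanishes at `♯ξ`.
    refine (Subspace.forall_mem_dualAnnihilator_apply_eq_zero_iff W _).1 fun η hη => ?_
    have h0 : ξ (sharp η) = 0 :=
      hξ (Submodule.mem_sup_right (Submodule.mem_map_of_mem hη))
    rw [hskew, h0, neg_zero]

/-- Let `V` be a finite-dimensional real vector space, `Π` a bivector on `V`
(with induced `♯ : V* → V`), and `W ⊆ V` a subspace.  The following are equivalent: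
(i) `V = W + ♯(W⁰)` (`W` is cosymplectic);
(ii) `V = W ⊕ ♯(W⁰)`;
(iii) `W ∩ ♯(W⁰) = {0}` and `W⁰ ∩ ker ♯ = {0}` (`W` is Poisson-Dirac of rank zero);
(iv) `W ∩ ♯(W⁰) = {0}` and `W + Im ♯ = V`. -/
theorem cosymplectic_subspace_tfae
    {V : Type*} [AddCommGroup V] [Module ℝ V] [FiniteDimensional ℝ V]
    (Pi : Dual ℝ V →ₗ[ℝ] Dual ℝ V →ₗ[ℝ] ℝ) (hPi : ∀ ξ, Pi ξ ξ = 0)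
    (sharp : Dual ℝ V →ₗ[ℝ] V) (hsharp : ∀ ξ η, η (sharp ξ) = Pi ξ η)
    (W : Submodule ℝ V) :
    ((W ⊔ Submodule.map sharp W.dualAnnihilator = ⊤) ↔
      (W ⊔ Submodule.map sharp W.dualAnnihilator = ⊤ ∧
       W ⊓ Submodule.map sharp W.dualAnnihilator = ⊥)) ∧
    ((W ⊔ Submodule.map sharp W.dualAnnihilator = ⊤) ↔
      (W ⊓ Submodule.map sharp W.dualAnnihilator = ⊥ ∧
       W.dualAnnihilator ⊓ LinearMap.ker sharp = ⊥)) ∧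
    ((W ⊔ Submodule.map sharp W.dualAnnihilator = ⊤) ↔
      (W ⊓ Submodule.map sharp W.dualAnnihilator = ⊥ ∧
       W ⊔ LinearMap.range sharp = ⊤)) := by
  have hskew : ∀ ξ η : Dual ℝ V, η (sharp ξ) = -ξ (sharp η) := by
    intro ξ η
    have h := hPi (ξ + η)
    simp only [map_add, LinearMap.add_apply, hPi] at h
    rw [hsharp, hsharp]
    linarith
  have key := sup_map_sharp_eq_top_iff sharp hskew W
  have inf_of_top : W ⊔ Submodule.map sharp W.dualAnnihilator = ⊤ →
      W ⊓ Submodule.map sharp W.dualAnnihilator = ⊥ := by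
    intro h
    rw [eq_bot_iff]
    rintro _ ⟨hW, ξ, hξ, rfl⟩
    simp [key.1 h ξ hξ hW]
  have ker_of_top : W ⊔ LinearMap.range sharp = ⊤ →
      W.dualAnnihilator ⊓ LinearMap.ker sharp = ⊥ := by
    intro h
    rw [eq_bot_iff]
    rintro ξ ⟨hξ, hker⟩
    have hle : W ⊔ LinearMap.range sharp ≤ LinearMap.ker ξ := by
      refine sup_le (fun w hw => (Submodule.mem_dualAnnihilator ξ).1 hξ w hw) ?_
      rintro _ ⟨η, rfl⟩
      rw [LinearMap.mem_ker, hskew, LinearMap.mem_ker.1 hker, map_zero, neg_zero]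
    rw [h, top_le_iff] at hle
    exact LinearMap.ker_eq_top.1 hle
  have range_of_top : W ⊔ Submodule.map sharp W.dualAnnihilator = ⊤ →
      W ⊔ LinearMap.range sharp = ⊤ := fun h =>
    top_le_iff.1 (h.ge.trans (sup_le_sup_left LinearMap.map_le_range W))
  have top_of_inf_ker : W ⊓ Submodule.map sharp W.dualAnnihilator = ⊥ →
      W.dualAnnihilator ⊓ LinearMap.ker sharp = ⊥ →
      W ⊔ Submodule.map sharp W.dualAnnihilator = ⊤ := by
    intro hinf hker
    refine key.2 fun ξ hξ hW => ?_
    have h0 : sharp ξ ∈ W ⊓ Submodule.map sharp W.dualAnnihilator :=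
      ⟨hW, Submodule.mem_map_of_mem hξ⟩
    rw [hinf, Submodule.mem_bot] at h0
    have h1 : ξ ∈ W.dualAnnihilator ⊓ LinearMap.ker sharp := ⟨hξ, h0⟩
    rwa [hker, Submodule.mem_bot] at h1
  exact ⟨⟨fun h => ⟨h, inf_of_top h⟩, And.left⟩,
    ⟨fun h => ⟨inf_of_top h, ker_of_top (range_of_top h)⟩, fun h => top_of_inf_ker h.1 h.2⟩,
    ⟨fun h => ⟨inf_of_top h, range_of_top h⟩, fun h => top_of_inf_ker h.1 (ker_of_top h.2)⟩⟩
end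

section
/- Let V be a finite-dimensional real vector space, Π a bivector on V, and W ⊆ V a subspace. Then W⁰ ⊆ ker ♯ if and only if Im ♯ ⊆ W. Either condition implies that W is a Poisson-Dirac subspace whose rank equals the codimension of W, i.e. dim(W⁰ ∩ ker ♯) = dim V − dim W; conversely, a Poisson-Dirac subspace whose rank equals its codimension satisfies W⁰ ⊆ ker ♯ (so W is a Poisson subspace). -/
/-!
Antisymmetry of `Π` gives `η (♯ξ) = - ξ (♯η)`. A vector lies in `W` iff it is killed by `W⁰`, so
`Im ♯ ⊆ W` says that this pairing vanishes for all `ξ` and all `η ∈ W⁰`; since covectors separate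
points, that is the same as `♯` vanishing on `W⁰`. The rank statements follow from
`dim W⁰ = dim V - dim W`: the subspace `W⁰ ∩ ker ♯` of `W⁰` has full dimension iff it is `W⁰`.
-/

open Module

/-- Let `V` be a finite-dimensional real vector space, `Π` a bivector on
`V` (with induced `♯ : V* → V`), and `W ⊆ V` a subspace.  Then `W⁰ ⊆ ker ♯` iff
`Im ♯ ⊆ W` (`W` is a Poisson subspace).  Either condition implies that `W` is a
Poisson-Dirac subspace whose rank equals the codimension of `W`, i.e.
`dim (W⁰ ∩ ker ♯) = dim V − dim W`; conversely, a Poisson-Dirac subspace whose rank equals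
its codimension satisfies `W⁰ ⊆ ker ♯`. -/
theorem poisson_subspace_iff_maximal_rank
    {V : Type*} [AddCommGroup V] [Module ℝ V] [FiniteDimensional ℝ V]
    (Pi : Dual ℝ V →ₗ[ℝ] Dual ℝ V →ₗ[ℝ] ℝ) (hPi : ∀ ξ, Pi ξ ξ = 0)
    (sharp : Dual ℝ V →ₗ[ℝ] V) (hsharp : ∀ ξ η, η (sharp ξ) = Pi ξ η)
    (W : Submodule ℝ V) :
    (W.dualAnnihilator ≤ LinearMap.ker sharp ↔ LinearMap.range sharp ≤ W) ∧
    (LinearMap.range sharp ≤ W →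
      (W ⊓ Submodule.map sharp W.dualAnnihilator = ⊥ ∧
       finrank ℝ (W.dualAnnihilator ⊓ LinearMap.ker sharp : Submodule ℝ (Dual ℝ V))
         = finrank ℝ V - finrank ℝ W)) ∧
    ((W ⊓ Submodule.map sharp W.dualAnnihilator = ⊥ ∧
      finrank ℝ (W.dualAnnihilator ⊓ LinearMap.ker sharp : Submodule ℝ (Dual ℝ V))
        = finrank ℝ V - finrank ℝ W) →
      W.dualAnnihilator ≤ LinearMap.ker sharp) := by
  have skew : ∀ ξ η : Dual ℝ V, η (sharp ξ) = - ξ (sharp η) := by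
    intro ξ η
    have h := hPi (ξ + η)
    simp only [map_add, LinearMap.add_apply, hPi] at h
    rw [hsharp, hsharp]
    linarith
  have iff1 : W.dualAnnihilator ≤ LinearMap.ker sharp ↔ LinearMap.range sharp ≤ W := by
    constructor
    · rintro h _ ⟨ξ, rfl⟩
      rw [← Subspace.forall_mem_dualAnnihilator_apply_eq_zero_iff]
      intro η hη
      rw [skew, LinearMap.mem_ker.mp (h hη), map_zero, neg_zero]
    · intro h η hη
      rw [LinearMap.mem_ker, ← Module.forall_dual_apply_eq_zero_iff ℝ]
      intro ξ
      rw [skew, (Submodule.mem_dualAnnihilator η).mp hη _ (h ⟨ξ, rfl⟩), neg_zero]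
  have hdim := Subspace.finrank_add_finrank_dualAnnihilator_eq W
  refine ⟨iff1, fun h => ?_, fun h => ?_⟩
  · have hk := iff1.mpr h
    refine ⟨?_, ?_⟩
    · rw [LinearMap.le_ker_iff_map.mp hk, inf_bot_eq]
    · rw [inf_eq_left.mpr hk]
      omega
  · have heq : W.dualAnnihilator ⊓ LinearMap.ker sharp = W.dualAnnihilator :=
      Submodule.eq_of_le_of_finrank_eq inf_le_left (by rw [h.2]; omega)
    exact inf_eq_left.mp heq
end

section
/- Let V be a finite-dimensional real vector space, Π a bivector on V, and W ⊆ V a Poisson-Dirac subspace with induced bivector Π_W and induced map ♯_W : W* → W. Then the image of ♯_W, viewed as a subspace of V via the inclusion W ⊆ V, equals W ∩ Im ♯, and there is a direct sum decomposition Im ♯ = (W ∩ Im ♯) ⊕ ♯(W⁰). -/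
/-!
Skew-symmetry of `Π` identifies `A_W = ♯⁻¹(W)` with the annihilator of `♯(W⁰)`. Hence the
Poisson-Dirac condition dualizes to `A_W + W⁰ = (♯(W⁰) ∩ W)⁰ = V*`
(`exists_add_of_poissonDirac`). Applying `♯` gives the decomposition of `Im ♯`; restricting to `W`
shows that every functional on `W` extends to an element of `A_W`, and for `α ∈ A_W` the defining
property of `Π_W` says exactly that `♯_W (α|_W) = ♯ α`, which gives the image of `♯_W`.
-/

open Module

/-- The dual form of the Poisson-Dirac condition: `V* = A_W + W⁰`. -/
lemma exists_add_of_poissonDirac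
    {V : Type*} [AddCommGroup V] [Module ℝ V] [FiniteDimensional ℝ V]
    (Pi : Dual ℝ V →ₗ[ℝ] Dual ℝ V →ₗ[ℝ] ℝ) (hPi : ∀ ξ, Pi ξ ξ = 0)
    (sharp : Dual ℝ V →ₗ[ℝ] V) (hsharp : ∀ ξ η, η (sharp ξ) = Pi ξ η)
    (W : Submodule ℝ V)
    (hPD : W ⊓ Submodule.map sharp W.dualAnnihilator = ⊥) (ξ : Dual ℝ V) :
    ∃ α β : Dual ℝ V, sharp α ∈ W ∧ β ∈ W.dualAnnihilator ∧ α + β = ξ := by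
  have h : W.dualAnnihilator ⊔ (Submodule.map sharp W.dualAnnihilator).dualAnnihilator = ⊤ := by
    rw [← Subspace.dualAnnihilator_inf_eq, hPD, Submodule.dualAnnihilator_bot]
  obtain ⟨β, hβ, α, hα, rfl⟩ := Submodule.mem_sup.mp (h ▸ Submodule.mem_top : ξ ∈ _)
  refine ⟨α, β, ?_, hβ, add_comm _ _⟩
  rw [← Subspace.forall_mem_dualAnnihilator_apply_eq_zero_iff]
  intro γ hγ
  have h1 : α (sharp γ) = 0 :=
    (Submodule.mem_dualAnnihilator α).mp hα _ (Submodule.mem_map_of_mem hγ)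
  have h2 : Pi α γ = -Pi γ α := by
    have := hPi (α + γ)
    simp only [map_add, LinearMap.add_apply, hPi] at this
    linarith
  rw [hsharp, h2, ← hsharp, h1, neg_zero]

/-- Let `V` be a finite-dimensional real vector space, `Π` a bivector on
`V` (with induced `♯ : V* → V`), and `W ⊆ V` a Poisson-Dirac subspace with induced bivector
`Π_W` and induced map `♯_W : W* → W`.  Then the image of `♯_W`, viewed inside `V` via the
inclusion `W ⊆ V`, equals `W ∩ Im ♯`, and there is a direct sum decomposition
`Im ♯ = (W ∩ Im ♯) ⊕ ♯(W⁰)`. -/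
theorem poisson_dirac_image_of_induced_sharp
    {V : Type*} [AddCommGroup V] [Module ℝ V] [FiniteDimensional ℝ V]
    (Pi : Dual ℝ V →ₗ[ℝ] Dual ℝ V →ₗ[ℝ] ℝ) (hPi : ∀ ξ, Pi ξ ξ = 0)
    (sharp : Dual ℝ V →ₗ[ℝ] V) (hsharp : ∀ ξ η, η (sharp ξ) = Pi ξ η)
    (W : Submodule ℝ V)
    (hPD : W ⊓ Submodule.map sharp W.dualAnnihilator = ⊥)
    (PiW : Dual ℝ W →ₗ[ℝ] Dual ℝ W →ₗ[ℝ] ℝ)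
    (hPiW : ∀ ξ ∈ Submodule.comap sharp W, ∀ η ∈ Submodule.comap sharp W,
      PiW (W.subtype.dualMap ξ) (W.subtype.dualMap η) = Pi ξ η)
    (sharpW : Dual ℝ W →ₗ[ℝ] W) (hsharpW : ∀ ζ ζ', ζ' (sharpW ζ) = PiW ζ ζ') :
    Submodule.map W.subtype (LinearMap.range sharpW) = W ⊓ LinearMap.range sharp ∧
    (W ⊓ LinearMap.range sharp) ⊔ Submodule.map sharp W.dualAnnihilator
      = LinearMap.range sharp ∧
    (W ⊓ LinearMap.range sharp) ⊓ Submodule.map sharp W.dualAnnihilator = ⊥ := by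
  have key := exists_add_of_poissonDirac Pi hPi sharp hsharp W hPD
  have hext : ∀ ζ : Dual ℝ W, ∃ α, sharp α ∈ W ∧ W.subtype.dualMap α = ζ := by
    intro ζ
    obtain ⟨ξ, rfl⟩ := LinearMap.dualMap_surjective_of_injective W.injective_subtype ζ
    obtain ⟨α, β, hα, hβ, rfl⟩ := key ξ
    refine ⟨α, hα, ?_⟩
    ext w
    simp [(Submodule.mem_dualAnnihilator β).mp hβ w w.2]
  have hres : ∀ α, ∀ hα : sharp α ∈ W, sharpW (W.subtype.dualMap α) = ⟨sharp α, hα⟩ := by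
    intro α hα
    rw [← sub_eq_zero, ← Module.forall_dual_apply_eq_zero_iff ℝ]
    intro ζ
    obtain ⟨γ, hγ, rfl⟩ := hext ζ
    rw [map_sub, hsharpW, hPiW α hα γ hγ, ← hsharp]
    simp
  refine ⟨le_antisymm ?_ ?_, le_antisymm ?_ ?_, ?_⟩
  · rintro _ ⟨_, ⟨ζ, rfl⟩, rfl⟩
    obtain ⟨α, hα, rfl⟩ := hext ζ
    rw [hres α hα]
    exact ⟨hα, α, rfl⟩
  · rintro _ ⟨hα, α, rfl⟩
    exact ⟨_, ⟨W.subtype.dualMap α, rfl⟩, by rw [hres α hα]; rfl⟩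
  · exact sup_le inf_le_right LinearMap.map_le_range
  · rintro _ ⟨ξ, rfl⟩
    obtain ⟨α, β, hα, hβ, rfl⟩ := key ξ
    rw [map_add]
    exact Submodule.add_mem_sup ⟨hα, α, rfl⟩ (Submodule.mem_map_of_mem hβ)
  · exact le_bot_iff.mp ((inf_le_inf_right _ inf_le_left).trans hPD.le)
end

section
/- Let V be a finite-dimensional real vector space, Π a bivector on V with associated symplectic space (S, ω) where S = Im ♯, and W ⊆ V any subspace. Then the radical of the restriction of ω to W ∩ S, namely {v ∈ W ∩ S : ω(v, w) = 0 for all w ∈ W ∩ S}, equals W ∩ ♯(W⁰). In particular, W is a Poisson-Dirac subspace of (V, Π) if and only if W ∩ S is a symplectic subspace of (S, ω), i.e. the restriction of ω to W ∩ S is nondegenerate. -/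
/-!
Write `v = ♯ξ`. Since `ω (♯ξ) (♯η) = Π ξ η = -ξ (♯η)`, the vector `v` is `ω`-orthogonal to `W ∩ S`
exactly when `ξ` annihilates `W ∩ S`. In finite dimension `(W ∩ S)⁰ = W⁰ + S⁰`, and `♯` vanishes on
`S⁰` because `Π` is alternating, so this holds exactly when `v ∈ ♯(W⁰)`. The criterion for `W` to be
Poisson-Dirac is the case where this radical is zero.
-/

open Module

/-- Let `V` be a finite-dimensional real vector space, `Π` a bivector on
`V` with associated symplectic space `(S, ω)`, `S = Im ♯`, `ω (♯ξ) (♯η) = Π ξ η`, and let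
`W ⊆ V` be any subspace.  Then the radical of the restriction of `ω` to `W ∩ S`, namely
`{v ∈ W ∩ S : ω v w = 0 for all w ∈ W ∩ S}`, equals `W ∩ ♯(W⁰)`.  In particular, `W` is a
Poisson-Dirac subspace of `(V, Π)` iff `W ∩ S` is a symplectic subspace of `(S, ω)`, i.e.
the restriction of `ω` to `W ∩ S` is nondegenerate. -/
theorem poisson_dirac_iff_symplectic_intersection
    {V : Type*} [AddCommGroup V] [Module ℝ V] [FiniteDimensional ℝ V]
    (Pi : Dual ℝ V →ₗ[ℝ] Dual ℝ V →ₗ[ℝ] ℝ) (hPi : ∀ ξ, Pi ξ ξ = 0)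
    (sharp : Dual ℝ V →ₗ[ℝ] V) (hsharp : ∀ ξ η, η (sharp ξ) = Pi ξ η)
    (ω : ↥(LinearMap.range sharp) →ₗ[ℝ] ↥(LinearMap.range sharp) →ₗ[ℝ] ℝ)
    (hω : ∀ ξ η : Dual ℝ V,
      ω ⟨sharp ξ, LinearMap.mem_range_self sharp ξ⟩
        ⟨sharp η, LinearMap.mem_range_self sharp η⟩ = Pi ξ η)
    (W : Submodule ℝ V) :
    (∀ v : V,
      (v ∈ W ∧ ∃ hv : v ∈ LinearMap.range sharp,
        ∀ w : V, w ∈ W → ∀ hw : w ∈ LinearMap.range sharp, ω ⟨v, hv⟩ ⟨w, hw⟩ = 0) ↔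
      v ∈ W ⊓ Submodule.map sharp W.dualAnnihilator) ∧
    (W ⊓ Submodule.map sharp W.dualAnnihilator = ⊥ ↔
      ∀ v : V, v ∈ W → ∀ hv : v ∈ LinearMap.range sharp,
        (∀ w : V, w ∈ W → ∀ hw : w ∈ LinearMap.range sharp, ω ⟨v, hv⟩ ⟨w, hw⟩ = 0) →
        v = 0) := by
  have hskew : ∀ ξ η, Pi ξ η = -Pi η ξ := fun ξ η => by
    have h := hPi (ξ + η)
    simp only [map_add, LinearMap.add_apply, hPi] at h
    linarith
  have hrad : ∀ v : V,
      (v ∈ W ∧ ∃ hv : v ∈ LinearMap.range sharp,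
        ∀ w : V, w ∈ W → ∀ hw : w ∈ LinearMap.range sharp, ω ⟨v, hv⟩ ⟨w, hw⟩ = 0) ↔
      v ∈ W ⊓ Submodule.map sharp W.dualAnnihilator := by
    intro v
    constructor
    · rintro ⟨hvW, ⟨ξ, rfl⟩, h⟩
      refine ⟨hvW, ?_⟩
      have hξ : ξ ∈ (W ⊓ LinearMap.range sharp).dualAnnihilator := by
        rw [Submodule.mem_dualAnnihilator]
        rintro _ ⟨hw, η, rfl⟩
        have h0 := h _ hw ⟨η, rfl⟩
        rw [hω, hskew] at h0
        rw [hsharp]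
        linarith
      rw [Subspace.dualAnnihilator_inf_eq] at hξ
      obtain ⟨α, hα, β, hβ, rfl⟩ := Submodule.mem_sup.mp hξ
      have hβ0 : sharp β = 0 := by
        rw [← Module.forall_dual_apply_eq_zero_iff ℝ]
        intro η
        have h0 := (Submodule.mem_dualAnnihilator β).mp hβ _ ⟨η, rfl⟩
        rw [hsharp] at h0
        rw [hsharp, hskew, h0, neg_zero]
      exact ⟨α, hα, by rw [map_add, hβ0, add_zero]⟩
    · rintro ⟨hvW, ξ, hξ, rfl⟩
      refine ⟨hvW, ⟨ξ, rfl⟩, ?_⟩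
      rintro _ hw ⟨η, rfl⟩
      have h0 := (Submodule.mem_dualAnnihilator ξ).mp hξ _ hw
      rw [hsharp] at h0
      rw [hω, hskew, h0, neg_zero]
  refine ⟨hrad, ?_⟩
  rw [Submodule.eq_bot_iff]
  constructor
  · intro h v hvW hv hvω
    exact h v ((hrad v).mp ⟨hvW, hv, hvω⟩)
  · intro h v hv
    obtain ⟨hvW, hvS, hvω⟩ := (hrad v).mpr hv
    exact h v hvW hvS hvω
end

section
/- Let V be a finite-dimensional real vector space and Π a bivector on V. Define the bilinear form ω_Π on V ⊕ V* by ω_Π((v₁, ξ₁), (v₂, ξ₂)) = ξ₁(v₂) − ξ₂(v₁) + Π(ξ₁, ξ₂). Then ω_Π is alternating and nondegenerate (a linear symplectic form on V ⊕ V*). Moreover, if W ⊆ V is a Poisson-Dirac subspace, then for (v₁, ξ₁) ∈ W ⊕ A_W one has ω_Π((v₁, ξ₁), (v₂, ξ₂)) = 0 for all v₂ ∈ W and all ξ₂ ∈ A_W if and only if v₁ = 0 and ξ₁ ∈ W⁰ ∩ ker ♯; that is, the radical of the restriction of ω_Π to W ⊕ A_W equals {0} ⊕ (W⁰ ∩ ker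 ♯). -/
/-! Nondegeneracy follows by pairing `p` with `(v, 0)` and then with `(0, ξ)`.

For the radical on `W ⊕ A_W`: pairing with `(v₂, 0)`, `v₂ ∈ W`, gives `ξ₁ ∈ W⁰`, so
`♯ξ₁ ∈ W ∩ ♯(W⁰) = 0`. The remaining condition is that every `ξ₂ ∈ A_W` kills `v₁`. Since
`♯` is skew, `A_W` contains (indeed equals) the annihilator of `♯(W⁰)`
(`mem_comap_of_mem_dualAnnihilator_map`), so `v₁ ∈ W ∩ ♯(W⁰) = 0` as well. -/

open Module

/-- The inclusion `(♯W⁰)⁰ ⊆ A_W`: if `ξ` kills `♯(W⁰)`, then by skewness every `η ∈ W⁰` kills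
`♯ξ`, whence `♯ξ ∈ W`. -/
lemma mem_comap_of_mem_dualAnnihilator_map
    {V : Type*} [AddCommGroup V] [Module ℝ V]
    {Pi : Dual ℝ V →ₗ[ℝ] Dual ℝ V →ₗ[ℝ] ℝ} (hPi : ∀ ξ, Pi ξ ξ = 0)
    {sharp : Dual ℝ V →ₗ[ℝ] V} (hsharp : ∀ ξ η, η (sharp ξ) = Pi ξ η)
    (W : Submodule ℝ V) {ξ : Dual ℝ V}
    (hξ : ξ ∈ (Submodule.map sharp W.dualAnnihilator).dualAnnihilator) :
    ξ ∈ Submodule.comap sharp W := by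
  rw [Submodule.mem_comap, ← Subspace.forall_mem_dualAnnihilator_apply_eq_zero_iff]
  intro η hη
  have h0 : Pi η ξ = 0 := by
    rw [← hsharp]
    exact (Submodule.mem_dualAnnihilator ξ).1 hξ _ (Submodule.mem_map_of_mem hη)
  have hskew : -Pi ξ η = Pi η ξ := LinearMap.IsAlt.neg hPi ξ η
  rw [hsharp]
  linarith

/-- Let `V` be a finite-dimensional real vector space and `Π` a bivector
on `V` (with induced `♯ : V* → V`).  Define the bilinear form `ω_Π` on `V ⊕ V*` by
`ω_Π (v₁,ξ₁) (v₂,ξ₂) = ξ₁ v₂ − ξ₂ v₁ + Π ξ₁ ξ₂`.  Then `ω_Π` is alternating and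
nondegenerate (a linear symplectic form on `V ⊕ V*`).  Moreover, if `W ⊆ V` is a
Poisson-Dirac subspace, then for `(v₁, ξ₁) ∈ W ⊕ A_W` one has `ω_Π (v₁,ξ₁) (v₂,ξ₂) = 0`
for all `v₂ ∈ W` and all `ξ₂ ∈ A_W` iff `v₁ = 0` and `ξ₁ ∈ W⁰ ∩ ker ♯`; that is, the
radical of the restriction of `ω_Π` to `W ⊕ A_W` is `{0} ⊕ (W⁰ ∩ ker ♯)`. -/
theorem canonical_symplectic_form_on_sum_and_presymplectic_radical
    {V : Type*} [AddCommGroup V] [Module ℝ V] [FiniteDimensional ℝ V]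
    (Pi : Dual ℝ V →ₗ[ℝ] Dual ℝ V →ₗ[ℝ] ℝ) (hPi : ∀ ξ, Pi ξ ξ = 0)
    (sharp : Dual ℝ V →ₗ[ℝ] V) (hsharp : ∀ ξ η, η (sharp ξ) = Pi ξ η)
    (W : Submodule ℝ V)
    (hPD : W ⊓ Submodule.map sharp W.dualAnnihilator = ⊥)
    (ω : (V × Dual ℝ V) → (V × Dual ℝ V) → ℝ)
    (hωdef : ∀ p q : V × Dual ℝ V, ω p q = p.2 q.1 - q.2 p.1 + Pi p.2 q.2) :
    (∀ p, ω p p = 0) ∧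
    (∀ p, (∀ q, ω p q = 0) → p = 0) ∧
    (∀ v₁ ∈ W, ∀ ξ₁ ∈ Submodule.comap sharp W,
      ((∀ v₂ ∈ W, ∀ ξ₂ ∈ Submodule.comap sharp W, ω (v₁, ξ₁) (v₂, ξ₂) = 0) ↔
        (v₁ = 0 ∧ ξ₁ ∈ W.dualAnnihilator ⊓ LinearMap.ker sharp))) := by
  refine ⟨fun p => by simp [hωdef, hPi], fun p h => ?_, fun v₁ hv₁ ξ₁ hξ₁ => ⟨fun h => ?_, ?_⟩⟩
  · have h2 : p.2 = 0 := by
      ext v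
      simpa [hωdef] using h (v, 0)
    have h1 : p.1 = 0 := by
      refine (Module.forall_dual_apply_eq_zero_iff ℝ p.1).1 fun ξ => ?_
      simpa [hωdef, h2] using h (0, ξ)
    exact Prod.ext h1 h2
  · have hann : ξ₁ ∈ W.dualAnnihilator := by
      rw [Submodule.mem_dualAnnihilator]
      intro w hw
      simpa [hωdef] using h w hw 0 (Submodule.zero_mem _)
    have hker : sharp ξ₁ = 0 := by
      have hmem : sharp ξ₁ ∈ W ⊓ Submodule.map sharp W.dualAnnihilator :=
        ⟨hξ₁, Submodule.mem_map_of_mem hann⟩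
      simpa [hPD] using hmem
    have hv : v₁ ∈ Submodule.map sharp W.dualAnnihilator := by
      -- By the double annihilator theorem, it suffices to test against `(♯W⁰)⁰ ⊆ A_W`.
      refine (Subspace.forall_mem_dualAnnihilator_apply_eq_zero_iff _ v₁).1 fun ξ hξ => ?_
      have hz := h 0 W.zero_mem ξ (mem_comap_of_mem_dualAnnihilator_map hPi hsharp W hξ)
      simpa [hωdef, ← hsharp, hker] using hz
    have hmem : v₁ ∈ W ⊓ Submodule.map sharp W.dualAnnihilator := ⟨hv₁, hv⟩
    exact ⟨by simpa [hPD] using hmem, hann, hker⟩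
  · rintro ⟨rfl, hann, hker⟩ v₂ hv₂ ξ₂ -
    have h0 : ξ₁ v₂ = 0 := (Submodule.mem_dualAnnihilator ξ₁).1 hann v₂ hv₂
    have hs : sharp ξ₁ = 0 := hker
    simp [hωdef, ← hsharp, h0, hs]
end

section
/- Let a : ℝ³ → ℝ be a smooth function that is radially symmetric, i.e. a(x) = a(y) whenever ‖x‖ = ‖y‖. For smooth functions f, g : ℝ³ → ℝ define {f, g}(x) = a(x) · ⟨x, ∇f(x) × ∇g(x)⟩, where ∇ is the gradient, × the cross product and ⟨·,·⟩ the Euclidean inner product on ℝ³ (so {f, g}(x) = a(x) · det of the matrix with rows x, ∇f(x), ∇g(x)). Then {·,·} is a Poisson bracket on C^∞(ℝ³): it is ℝ-bilinear and antisymmetric, satisfies the Leibniz rule {fg, h} = f{g, h} + g{f, h}, and satisfies the Jacobi identity {f, {g, h}} + {g, {h, f}} + {h, {f, g}} = 0 for all smooth f, g, h. (This is the Poisson manifold M_a of the paper, the Kirillov-Poisson bracket of 𝔰𝔲(2)* rescaled by the radial function a.) -/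
/-!
In coordinates `{f, g} = a · det(x, ∇f, ∇g)`, so bilinearity, antisymmetry and the Leibniz rule
come from the corresponding properties of the partial derivatives and of the determinant.

For the Jacobi identity, expand `∇{g, h} = det(x, ∇g, ∇h) ∇a + a ∇det(x, ∇g, ∇h)`. The terms
containing `∇a` are multiples of `det(x, ∇f, ∇a)`, which vanishes because a radial function has
`x × ∇a = 0` (`rotation_derivative_eq_zero`: differentiate `a` along rotations about the coordinate
axes). The remaining terms are `a²` times the Jacobi identity of the Lie–Poisson bracket with
`a = 1`, a polynomial identity in the first and second partial derivatives once the second ones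
are known to commute (`partialDeriv_comm`).
-/

open scoped RealInnerProductSpace

/-- The rescaled Kirillov–Poisson bracket on `ℝ³ ≃ 𝔰𝔲(2)*`:
`{f, g}(x) = a(x) · ⟨x, ∇f(x) × ∇g(x)⟩`, where `∇` is the gradient, `×` the cross
product and `⟨·,·⟩` the Euclidean inner product on `ℝ³`. -/
noncomputable def radialBracket (a : EuclideanSpace ℝ (Fin 3) → ℝ)
    (f g : EuclideanSpace ℝ (Fin 3) → ℝ) : EuclideanSpace ℝ (Fin 3) → ℝ :=
  fun x => a x *
    ⟪x, (WithLp.equiv 2 (Fin 3 → ℝ)).symm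
          (crossProduct
            (WithLp.equiv 2 (Fin 3 → ℝ) (gradient f x))
            (WithLp.equiv 2 (Fin 3 → ℝ) (gradient g x)))⟫

/-- The `i`-th partial derivative of a function on `ℝ³`. -/
noncomputable def partialDeriv (i : Fin 3) (f : EuclideanSpace ℝ (Fin 3) → ℝ)
    (x : EuclideanSpace ℝ (Fin 3)) : ℝ :=
  fderiv ℝ f x (EuclideanSpace.single i 1)

lemma gradient_apply_eq_partialDeriv (f : EuclideanSpace ℝ (Fin 3) → ℝ)
    (x : EuclideanSpace ℝ (Fin 3)) (i : Fin 3) : gradient f x i = partialDeriv i f x := by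
  have h : ⟪gradient f x, EuclideanSpace.single i (1 : ℝ)⟫ = partialDeriv i f x := by
    simp [gradient, partialDeriv]
  rw [← h, EuclideanSpace.inner_single_right]
  simp

lemma radialBracket_eq (a f g : EuclideanSpace ℝ (Fin 3) → ℝ) :
    radialBracket a f g = fun x => a x *
      (x 0 * (partialDeriv 1 f x * partialDeriv 2 g x - partialDeriv 2 f x * partialDeriv 1 g x)
      + x 1 * (partialDeriv 2 f x * partialDeriv 0 g x - partialDeriv 0 f x * partialDeriv 2 g x)
      + x 2 * (partialDeriv 0 f x * partialDeriv 1 g x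
        - partialDeriv 1 f x * partialDeriv 0 g x)) := by
  funext x
  simp only [← gradient_apply_eq_partialDeriv]
  simp [radialBracket, PiLp.inner_apply, Fin.sum_univ_three, cross_apply]
  left
  ring

section rules

variable {f g : EuclideanSpace ℝ (Fin 3) → ℝ} {x : EuclideanSpace ℝ (Fin 3)} (i : Fin 3)

lemma partialDeriv_add (hf : DifferentiableAt ℝ f x) (hg : DifferentiableAt ℝ g x) :
    partialDeriv i (fun y => f y + g y) x = partialDeriv i f x + partialDeriv i g x := by
  simp [partialDeriv, fderiv_fun_add hf hg]

lemma partialDeriv_sub (hf : DifferentiableAt ℝ f x) (hg : DifferentiableAt ℝ g x) :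
    partialDeriv i (fun y => f y - g y) x = partialDeriv i f x - partialDeriv i g x := by
  simp [partialDeriv, fderiv_fun_sub hf hg]

lemma partialDeriv_mul (hf : DifferentiableAt ℝ f x) (hg : DifferentiableAt ℝ g x) :
    partialDeriv i (fun y => f y * g y) x =
      f x * partialDeriv i g x + g x * partialDeriv i f x := by
  simp [partialDeriv, fderiv_fun_mul hf hg]

lemma partialDeriv_smul_add (c : ℝ) (hf : DifferentiableAt ℝ f x) (hg : DifferentiableAt ℝ g x) :
    partialDeriv i (c • f + g) x = c * partialDeriv i f x + partialDeriv i g x := by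
  simp [partialDeriv, fderiv_add (hf.const_smul c) hg, fderiv_const_smul hf]

lemma partialDeriv_coord (k : Fin 3) :
    partialDeriv i (fun y : EuclideanSpace ℝ (Fin 3) => y k) x = if k = i then 1 else 0 := by
  have h : HasFDerivAt (fun y : EuclideanSpace ℝ (Fin 3) => y k)
      (EuclideanSpace.proj k : EuclideanSpace ℝ (Fin 3) →L[ℝ] ℝ) x :=
    (EuclideanSpace.proj k : EuclideanSpace ℝ (Fin 3) →L[ℝ] ℝ).hasFDerivAt
  simp [partialDeriv, h.fderiv]

lemma partialDeriv_differentiable (hf : ContDiff ℝ (⊤ : ℕ∞) f) :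
    Differentiable ℝ (partialDeriv i f) := by
  have h : ContDiff ℝ 1 (fderiv ℝ f) := hf.fderiv_right (by norm_cast)
  exact (h.differentiable one_ne_zero).clm_apply (differentiable_const _)

lemma partialDeriv_comm (j : Fin 3) (hf : ContDiff ℝ (⊤ : ℕ∞) f) :
    partialDeriv i (partialDeriv j f) x = partialDeriv j (partialDeriv i f) x := by
  have h : ContDiff ℝ 1 (fderiv ℝ f) := hf.fderiv_right (by norm_cast)
  have hd : DifferentiableAt ℝ (fderiv ℝ f) x := h.differentiable one_ne_zero x
  have key : ∀ u v : Fin 3, partialDeriv u (partialDeriv v f) x =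
      fderiv ℝ (fderiv ℝ f) x (EuclideanSpace.single u 1) (EuclideanSpace.single v 1) := by
    intro u v
    change fderiv ℝ (fun y => fderiv ℝ f y (EuclideanSpace.single v 1)) x _ = _
    rw [fderiv_clm_apply hd (differentiableAt_const _)]
    simp
  rw [key, key]
  have hs : IsSymmSndFDerivAt ℝ f x :=
    hf.contDiffAt.isSymmSndFDerivAt (by simp; norm_cast)
  exact hs _ _

end rules

/-- The derivative of a radial function along the infinitesimal rotation in the `(i, j)`-plane
vanishes; the three choices of plane together say `x × ∇a = 0`. -/
lemma rotation_derivative_eq_zero {a : EuclideanSpace ℝ (Fin 3) → ℝ}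
    (ha : Differentiable ℝ a)
    (hrad : ∀ x y : EuclideanSpace ℝ (Fin 3), ‖x‖ = ‖y‖ → a x = a y)
    {i j : Fin 3} (hij : i ≠ j) (x : EuclideanSpace ℝ (Fin 3)) :
    x i * partialDeriv j a x - x j * partialDeriv i a x = 0 := by
  -- the orbit of `x` under rotation by the angle `t` in the `(i, j)`-plane
  let γ : ℝ → EuclideanSpace ℝ (Fin 3) := fun t =>
    x + ((Real.cos t - 1) * x i - Real.sin t * x j) • EuclideanSpace.single i (1 : ℝ)
      + (Real.sin t * x i + (Real.cos t - 1) * x j) • EuclideanSpace.single j (1 : ℝ)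
  have hγ0 : γ 0 = x := by simp [γ]
  have hnorm : ∀ t, ‖γ t‖ = ‖x‖ := by
    intro t
    rw [EuclideanSpace.norm_eq, EuclideanSpace.norm_eq]
    congr 1
    have hsc := Real.sin_sq_add_cos_sq t
    fin_cases i <;> fin_cases j <;> simp [Fin.sum_univ_three, γ] at hij ⊢ <;>
      grind
  have hγ : HasDerivAt γ
      ((-x j) • EuclideanSpace.single i (1 : ℝ) + x i • EuclideanSpace.single j (1 : ℝ)) 0 := by
    have hc : HasDerivAt (fun t => Real.cos t - 1) 0 0 := by
      simpa using (Real.hasDerivAt_cos 0).sub_const 1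
    have hs : HasDerivAt Real.sin 1 0 := by simpa using Real.hasDerivAt_sin 0
    have h1 := (((hc.mul_const (x i)).sub (hs.mul_const (x j))).smul_const
      (EuclideanSpace.single i (1 : ℝ))).const_add x
    have h2 := ((hs.mul_const (x i)).add (hc.mul_const (x j))).smul_const
      (EuclideanSpace.single j (1 : ℝ))
    have h3 := h1.fun_add h2
    simpa [γ] using h3
  have hcomp : HasDerivAt (a ∘ γ) (fderiv ℝ a x
      ((-x j) • EuclideanSpace.single i (1 : ℝ) + x i • EuclideanSpace.single j (1 : ℝ))) 0 := by
    have h := (ha x).hasFDerivAt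
    rw [← hγ0] at h
    have h' := h.comp_hasDerivAt 0 hγ
    rwa [hγ0] at h'
  have hconst : a ∘ γ = fun _ => a x := funext fun t => hrad _ _ (hnorm t)
  rw [hconst] at hcomp
  have h0 := hcomp.unique (hasDerivAt_const 0 (a x))
  simp only [map_add, map_smul, smul_eq_mul] at h0
  simp only [partialDeriv]
  linarith

lemma partialDeriv_radialBracket {a g h : EuclideanSpace ℝ (Fin 3) → ℝ}
    (ha : Differentiable ℝ a) (hg : ContDiff ℝ (⊤ : ℕ∞) g) (hh : ContDiff ℝ (⊤ : ℕ∞) h)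
    (i : Fin 3) (x : EuclideanSpace ℝ (Fin 3)) :
    partialDeriv i (radialBracket a g h) x =
      partialDeriv i a x *
        (x 0 * (partialDeriv 1 g x * partialDeriv 2 h x - partialDeriv 2 g x * partialDeriv 1 h x)
        + x 1 * (partialDeriv 2 g x * partialDeriv 0 h x - partialDeriv 0 g x * partialDeriv 2 h x)
        + x 2 * (partialDeriv 0 g x * partialDeriv 1 h x - partialDeriv 1 g x * partialDeriv 0 h x))
      + a x *
        ((if 0 = i then 1 else 0) *
            (partialDeriv 1 g x * partialDeriv 2 h x - partialDeriv 2 g x * partialDeriv 1 h x)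
        + (if 1 = i then 1 else 0) *
            (partialDeriv 2 g x * partialDeriv 0 h x - partialDeriv 0 g x * partialDeriv 2 h x)
        + (if 2 = i then 1 else 0) *
            (partialDeriv 0 g x * partialDeriv 1 h x - partialDeriv 1 g x * partialDeriv 0 h x)
        + x 0 * (partialDeriv i (partialDeriv 1 g) x * partialDeriv 2 h x
            + partialDeriv 1 g x * partialDeriv i (partialDeriv 2 h) x
            - partialDeriv i (partialDeriv 2 g) x * partialDeriv 1 h x
            - partialDeriv 2 g x * partialDeriv i (partialDeriv 1 h) x)
        + x 1 * (partialDeriv i (partialDeriv 2 g) x * partialDeriv 0 h x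
            + partialDeriv 2 g x * partialDeriv i (partialDeriv 0 h) x
            - partialDeriv i (partialDeriv 0 g) x * partialDeriv 2 h x
            - partialDeriv 0 g x * partialDeriv i (partialDeriv 2 h) x)
        + x 2 * (partialDeriv i (partialDeriv 0 g) x * partialDeriv 1 h x
            + partialDeriv 0 g x * partialDeriv i (partialDeriv 1 h) x
            - partialDeriv i (partialDeriv 1 g) x * partialDeriv 0 h x
            - partialDeriv 1 g x * partialDeriv i (partialDeriv 0 h) x)) := by
  have dg : ∀ k, Differentiable ℝ (partialDeriv k g) := fun k => partialDeriv_differentiable k hg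
  have dh : ∀ k, Differentiable ℝ (partialDeriv k h) := fun k => partialDeriv_differentiable k hh
  have dc : ∀ k : Fin 3, Differentiable ℝ (fun y : EuclideanSpace ℝ (Fin 3) => y k) :=
    fun k => (EuclideanSpace.proj k : EuclideanSpace ℝ (Fin 3) →L[ℝ] ℝ).differentiable
  have minor : ∀ k l, Differentiable ℝ (fun y =>
      partialDeriv k g y * partialDeriv l h y - partialDeriv l g y * partialDeriv k h y) :=
    fun k l => ((dg k).fun_mul (dh l)).fun_sub ((dg l).fun_mul (dh k))
  have term : ∀ m k l, Differentiable ℝ (fun y : EuclideanSpace ℝ (Fin 3) => y m *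
      (partialDeriv k g y * partialDeriv l h y - partialDeriv l g y * partialDeriv k h y)) :=
    fun m k l => (dc m).fun_mul (minor k l)
  have hterm : ∀ m k l, partialDeriv i (fun y : EuclideanSpace ℝ (Fin 3) => y m *
      (partialDeriv k g y * partialDeriv l h y - partialDeriv l g y * partialDeriv k h y)) x =
      (if m = i then 1 else 0) *
        (partialDeriv k g x * partialDeriv l h x - partialDeriv l g x * partialDeriv k h x)
      + x m * (partialDeriv i (partialDeriv k g) x * partialDeriv l h x
            + partialDeriv k g x * partialDeriv i (partialDeriv l h) x
            - partialDeriv i (partialDeriv l g) x * partialDeriv k h x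
            - partialDeriv l g x * partialDeriv i (partialDeriv k h) x) := by
    intro m k l
    rw [partialDeriv_mul i (dc m x) (minor k l x),
      partialDeriv_sub i ((dg k x).fun_mul (dh l x)) ((dg l x).fun_mul (dh k x)),
      partialDeriv_mul i (dg k x) (dh l x), partialDeriv_mul i (dg l x) (dh k x),
      partialDeriv_coord]
    ring
  rw [radialBracket_eq, partialDeriv_mul i (ha x)
      (((term 0 1 2 x).fun_add (term 1 2 0 x)).fun_add (term 2 0 1 x)),
    partialDeriv_add i ((term 0 1 2 x).fun_add (term 1 2 0 x)) (term 2 0 1 x),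
    partialDeriv_add i (term 0 1 2 x) (term 1 2 0 x), hterm, hterm, hterm]
  ring

/-- Let `a : ℝ³ → ℝ` be a smooth, radially symmetric function.  Then
`{f, g}(x) = a(x) · ⟨x, ∇f(x) × ∇g(x)⟩` is a Poisson bracket on `C^∞(ℝ³)`: it is
ℝ-bilinear and antisymmetric, satisfies the Leibniz rule `{fg, h} = f{g,h} + g{f,h}`, and
satisfies the Jacobi identity `{f,{g,h}} + {g,{h,f}} + {h,{f,g}} = 0` for all smooth
`f, g, h`.  (This is the Poisson manifold `M_a` of the paper, the Kirillov–Poisson bracket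
of `𝔰𝔲(2)*` rescaled by the radial function `a`.) -/
theorem radialBracket_is_poisson_bracket
    (a : EuclideanSpace ℝ (Fin 3) → ℝ)
    (ha : ContDiff ℝ (⊤ : ℕ∞) a)
    (hrad : ∀ x y : EuclideanSpace ℝ (Fin 3), ‖x‖ = ‖y‖ → a x = a y) :
    -- ℝ-linearity in the first argument
    (∀ (c : ℝ) (f f' g : EuclideanSpace ℝ (Fin 3) → ℝ),
      ContDiff ℝ (⊤ : ℕ∞) f → ContDiff ℝ (⊤ : ℕ∞) f' → ContDiff ℝ (⊤ : ℕ∞) g →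
      radialBracket a (c • f + f') g = c • radialBracket a f g + radialBracket a f' g) ∧
    -- ℝ-linearity in the second argument
    (∀ (c : ℝ) (f g g' : EuclideanSpace ℝ (Fin 3) → ℝ),
      ContDiff ℝ (⊤ : ℕ∞) f → ContDiff ℝ (⊤ : ℕ∞) g → ContDiff ℝ (⊤ : ℕ∞) g' →
      radialBracket a f (c • g + g') = c • radialBracket a f g + radialBracket a f g') ∧
    -- antisymmetry
    (∀ f g : EuclideanSpace ℝ (Fin 3) → ℝ, ContDiff ℝ (⊤ : ℕ∞) f → ContDiff ℝ (⊤ : ℕ∞) g →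
      radialBracket a f g = - radialBracket a g f) ∧
    -- Leibniz rule
    (∀ f g h : EuclideanSpace ℝ (Fin 3) → ℝ,
      ContDiff ℝ (⊤ : ℕ∞) f → ContDiff ℝ (⊤ : ℕ∞) g → ContDiff ℝ (⊤ : ℕ∞) h →
      radialBracket a (f * g) h = f * radialBracket a g h + g * radialBracket a f h) ∧
    -- Jacobi identity
    (∀ f g h : EuclideanSpace ℝ (Fin 3) → ℝ,
      ContDiff ℝ (⊤ : ℕ∞) f → ContDiff ℝ (⊤ : ℕ∞) g → ContDiff ℝ (⊤ : ℕ∞) h →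
      radialBracket a f (radialBracket a g h) + radialBracket a g (radialBracket a h f)
        + radialBracket a h (radialBracket a f g) = 0) := by
  have diff : ∀ {f : EuclideanSpace ℝ (Fin 3) → ℝ}, ContDiff ℝ (⊤ : ℕ∞) f → Differentiable ℝ f :=
    fun hf => hf.differentiable (by simp)
  refine ⟨?_, ?_, ?_, ?_, ?_⟩
  · intro c f f' g hf hf' hg
    funext x
    simp only [radialBracket_eq, Pi.add_apply, Pi.smul_apply, smul_eq_mul,
      partialDeriv_smul_add _ c (diff hf x) (diff hf' x)]
    ring
  · intro c f g g' hf hg hg'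
    funext x
    simp only [radialBracket_eq, Pi.add_apply, Pi.smul_apply, smul_eq_mul,
      partialDeriv_smul_add _ c (diff hg x) (diff hg' x)]
    ring
  · intro f g hf hg
    funext x
    simp only [radialBracket_eq, Pi.neg_apply]
    ring
  · intro f g h hf hg hh
    funext x
    have hm : ∀ i, partialDeriv i (f * g) x = f x * partialDeriv i g x + g x * partialDeriv i f x :=
      fun i => partialDeriv_mul i (diff hf x) (diff hg x)
    simp only [radialBracket_eq, Pi.add_apply, Pi.mul_apply, hm]
    ring
  · intro f g h hf hg hh
    funext x
    have r01 := rotation_derivative_eq_zero (diff ha) hrad (i := 0) (j := 1) (by decide) x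
    have r12 := rotation_derivative_eq_zero (diff ha) hrad (i := 1) (j := 2) (by decide) x
    have r20 := rotation_derivative_eq_zero (diff ha) hrad (i := 2) (j := 0) (by decide) x
    -- `det(x, ∇φ, ∇a) = -⟨∇φ, x × ∇a⟩ = 0`
    have det_eq_zero : ∀ φ : EuclideanSpace ℝ (Fin 3) → ℝ,
        x 0 * (partialDeriv 1 φ x * partialDeriv 2 a x - partialDeriv 2 φ x * partialDeriv 1 a x)
        + x 1 * (partialDeriv 2 φ x * partialDeriv 0 a x - partialDeriv 0 φ x * partialDeriv 2 a x)
        + x 2 * (partialDeriv 0 φ x * partialDeriv 1 a x - partialDeriv 1 φ x * partialDeriv 0 a x)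
          = 0 := by
      intro φ
      linear_combination (-partialDeriv 0 φ x) * r12 - partialDeriv 1 φ x * r20
        - partialDeriv 2 φ x * r01
    -- `det(x, ∇φ, ∇ψ)` is kept as a single scalar where it multiplies `∇a`
    have exists_det : ∀ φ ψ : EuclideanSpace ℝ (Fin 3) → ℝ, ∃ d : ℝ, d =
        x 0 * (partialDeriv 1 φ x * partialDeriv 2 ψ x - partialDeriv 2 φ x * partialDeriv 1 ψ x)
        + x 1 * (partialDeriv 2 φ x * partialDeriv 0 ψ x - partialDeriv 0 φ x * partialDeriv 2 ψ x)
        + x 2 * (partialDeriv 0 φ x * partialDeriv 1 ψ x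
          - partialDeriv 1 φ x * partialDeriv 0 ψ x) := fun φ ψ => ⟨_, rfl⟩
    obtain ⟨dgh, hdgh⟩ := exists_det g h
    obtain ⟨dhf, hdhf⟩ := exists_det h f
    obtain ⟨dfg, hdfg⟩ := exists_det f g
    have outer : ∀ φ ψ : EuclideanSpace ℝ (Fin 3) → ℝ, radialBracket a φ ψ x = a x *
        (x 0 * (partialDeriv 1 φ x * partialDeriv 2 ψ x - partialDeriv 2 φ x * partialDeriv 1 ψ x)
        + x 1 * (partialDeriv 2 φ x * partialDeriv 0 ψ x - partialDeriv 0 φ x * partialDeriv 2 ψ x)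
        + x 2 * (partialDeriv 0 φ x * partialDeriv 1 ψ x
          - partialDeriv 1 φ x * partialDeriv 0 ψ x)) :=
      fun φ ψ => congrFun (radialBracket_eq a φ ψ) x
    simp only [Pi.add_apply, Pi.zero_apply, outer]
    simp only [partialDeriv_radialBracket (diff ha) hg hh,
      partialDeriv_radialBracket (diff ha) hh hf, partialDeriv_radialBracket (diff ha) hf hg,
      ← hdgh, ← hdhf, ← hdfg]
    simp only [partialDeriv_comm 1 0 hf, partialDeriv_comm 2 0 hf, partialDeriv_comm 2 1 hf,
      partialDeriv_comm 1 0 hg, partialDeriv_comm 2 0 hg, partialDeriv_comm 2 1 hg,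
      partialDeriv_comm 1 0 hh, partialDeriv_comm 2 0 hh, partialDeriv_comm 2 1 hh]
    simp only [Fin.reduceEq, if_true, if_false]
    linear_combination a x * dgh * det_eq_zero f + a x * dhf * det_eq_zero g
      + a x * dfg * det_eq_zero h
end
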